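/- For all τ in the complex upper half-plane, with ζ = ζ(τ) and φ_j = φ_j(τ): φ1¹² = 2⁴(ζ−1)²(ζ+1)⁶/(ζ³(ζ+2)(2ζ+1)), φ2¹² = −ζ⁶(ζ+2)²/(2⁸(ζ+1)³(ζ−1)(2ζ+1)), φ3¹² = (ζ−1)⁴(ζ+2)(2ζ+1)/(3⁶ζ(ζ+1)⁴), φ4¹² = −(ζ−1)(ζ+2)⁴(2ζ+1)/(3⁶ζ⁴(ζ+1)), and φ5⁶ = (ζ−1)(ζ+2)(2ζ+1)/(3³ζ(ζ+1)). -/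

import Mathlib

open Complex

/-- The theta product θ(x;p) = ∏_{j≥0} (1 - pʲx)(1 - pʲ⁺¹x⁻¹). -/
noncomputable def jtheta (x p : ℂ) : ℂ :=
  ∏' j : ℕ, ((1 - p ^ j * x) * (1 - p ^ (j + 1) * x⁻¹))

/-- Dedekind's eta function η(τ) = e^{πiτ/12} ∏_{j≥1} (1 - e^{2πijτ}). -/
noncomputable def dedekindEta (τ : ℂ) : ℂ :=
  Complex.exp ((Real.pi : ℂ) * Complex.I * τ / 12) *
    ∏' j : ℕ, (1 - Complex.exp (2 * (Real.pi : ℂ) * Complex.I * (j + 1) * τ))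

/-- The eta quotient φ₁ = η(τ/2)²/η(τ)². -/
noncomputable def phi1 (τ : ℂ) : ℂ := dedekindEta (τ / 2) ^ 2 / dedekindEta τ ^ 2

/-- The eta quotient φ₂ = η(2τ)²/η(τ)². -/
noncomputable def phi2 (τ : ℂ) : ℂ := dedekindEta (2 * τ) ^ 2 / dedekindEta τ ^ 2

/-- The eta quotient φ₃ = η(3τ/2)/η(τ/2). -/
noncomputable def phi3 (τ : ℂ) : ℂ := dedekindEta (3 * τ / 2) / dedekindEta (τ / 2)

/-- The eta quotient φ₄ = η(6τ)/η(2τ). -/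
noncomputable def phi4 (τ : ℂ) : ℂ := dedekindEta (6 * τ) / dedekindEta (2 * τ)

/-- The eta quotient φ₅ = η(3τ)/η(τ). -/
noncomputable def phi5 (τ : ℂ) : ℂ := dedekindEta (3 * τ) / dedekindEta τ

/-- The Hauptmodul ζ(τ) = ω²θ(-1;p²)θ(-pω;p²)/(θ(-p;p²)θ(-ω;p²)),
with p = e^{πiτ} and ω = e^{2πi/3}. -/
noncomputable def hauptmodul (τ : ℂ) : ℂ :=
  let p := Complex.exp ((Real.pi : ℂ) * Complex.I * τ)
  let ω := Complex.exp (2 * (Real.pi : ℂ) * Complex.I / 3)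
  ω ^ 2 * jtheta (-1) (p ^ 2) * jtheta (-(p * ω)) (p ^ 2)
    / (jtheta (-p) (p ^ 2) * jtheta (-ω) (p ^ 2))

/-!
The five numbers `ζ`, `ζ - 1`, `ζ + 1`, `ζ + 2` and `2ζ + 1` are, up to a rational constant,
monomials in the `φ_j`, and the theorem is read off from these factorizations. For `ζ` itself the
monomial comes from evaluating the theta products at points of order two, three and six; the other
four are equivalent to polynomial relations between the `φ_j`, which are specializations at such
points of Weierstrass' three-term relation. The three-term relation holds because, by the Jacobi
triple product identity, `θ(xy) θ(x/y) / x` is up to a constant an alternating form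
`f(x) g(y) - g(x) f(y)`, so that it is a Plücker relation.
-/

open Filter
open scoped Topology Real

section QPochhammer

/-- The infinite `q`-Pochhammer symbol `(x; q)_∞ = ∏_{j ≥ 0} (1 - q ^ j x)`. -/
noncomputable def qPochhammer (x q : ℂ) : ℂ := ∏' j : ℕ, (1 - q ^ j * x)

/-- Euler's function `(q; q)_∞ = ∏_{j ≥ 1} (1 - q ^ j)`, the eta function without its
exponential prefactor. -/
noncomputable def eulerFunction (q : ℂ) : ℂ := qPochhammer q q

variable {q : ℂ}

lemma norm_pow_lt_one (hq : ‖q‖ < 1) {n : ℕ} (hn : n ≠ 0) : ‖q ^ n‖ < 1 := by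
  simpa using pow_lt_one₀ (norm_nonneg q) hq hn

lemma one_sub_ne_zero_of_norm_lt_one (hq : ‖q‖ < 1) : 1 - q ≠ 0 := by
  intro h
  rw [← sub_eq_zero.1 h, norm_one] at hq
  exact hq.false

lemma summable_norm_pow_mul (hq : ‖q‖ < 1) (x : ℂ) : Summable fun j : ℕ ↦ ‖-(q ^ j * x)‖ := by
  simpa using (summable_geometric_of_lt_one (norm_nonneg q) hq).mul_right ‖x‖

lemma multipliable_one_sub_pow_mul (hq : ‖q‖ < 1) (x : ℂ) :
    Multipliable fun j : ℕ ↦ 1 - q ^ j * x := by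
  simpa [sub_eq_add_neg] using multipliable_one_add_of_summable (summable_norm_pow_mul hq x)

lemma qPochhammer_ne_zero (hq : ‖q‖ < 1) {x : ℂ} (hx : ‖x‖ < 1) : qPochhammer x q ≠ 0 := by
  have factor_ne_zero (j : ℕ) : 1 + -(q ^ j * x) ≠ 0 := by
    rw [← sub_eq_add_neg]
    apply one_sub_ne_zero_of_norm_lt_one
    rw [norm_mul, norm_pow]
    exact mul_lt_one_of_nonneg_of_lt_one_right (pow_le_one₀ (norm_nonneg q) hq.le)
      (norm_nonneg x) hx
  simpa [qPochhammer, sub_eq_add_neg] using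
    tprod_one_add_ne_zero_of_summable factor_ne_zero (summable_norm_pow_mul hq x)

lemma eulerFunction_ne_zero (hq : ‖q‖ < 1) : eulerFunction q ≠ 0 :=
  qPochhammer_ne_zero hq hq

lemma prod_range_mul_qPochhammer (hq : ‖q‖ < 1) (x : ℂ) (n : ℕ) :
    (∏ j ∈ Finset.range n, (1 - q ^ j * x)) * qPochhammer (q ^ n * x) q = qPochhammer x q := by
  have shifted_factor (j : ℕ) : 1 - q ^ j * (q ^ n * x) = 1 - q ^ (j + n) * x := by
    rw [pow_add, mul_assoc]
  have shifted := multipliable_one_sub_pow_mul hq (q ^ n * x)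
  simp only [shifted_factor] at shifted
  rw [qPochhammer, tprod_congr shifted_factor]
  exact shifted.prod_mul_tprod_nat_mul' (f := fun j ↦ 1 - q ^ j * x)

lemma qPochhammer_eq_one_sub_mul (hq : ‖q‖ < 1) (x : ℂ) :
    qPochhammer x q = (1 - x) * qPochhammer (q * x) q := by
  simpa using (prod_range_mul_qPochhammer hq x 1).symm

lemma qPochhammer_mul_neg (hq : ‖q‖ < 1) (x : ℂ) :
    qPochhammer x q * qPochhammer (-x) q = qPochhammer (x ^ 2) (q ^ 2) := by
  unfold qPochhammer
  rw [← (multipliable_one_sub_pow_mul hq x).tprod_mul (multipliable_one_sub_pow_mul hq (-x))]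
  exact tprod_congr fun j ↦ by ring

lemma qPochhammer_mul_cubeRoots (hq : ‖q‖ < 1) (x : ℂ) {ω : ℂ} (hω : ω ^ 2 + ω + 1 = 0) :
    qPochhammer x q * (qPochhammer (x * ω) q * qPochhammer (x * ω ^ 2) q) =
      qPochhammer (x ^ 3) (q ^ 3) := by
  have mult := multipliable_one_sub_pow_mul hq
  unfold qPochhammer
  rw [← (mult _).tprod_mul (mult _), ← (mult _).tprod_mul ((mult _).mul (mult _))]
  refine tprod_congr fun j ↦ ?_
  rw [← pow_mul, mul_comm 3 j, pow_mul]
  generalize q ^ j = t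
  linear_combination (-t * x + t ^ 2 * x ^ 2 * ω - t ^ 3 * x ^ 3 * (ω - 1)) * hω

lemma qPochhammer_eq_even_mul_odd (hq : ‖q‖ < 1) (x : ℂ) :
    qPochhammer x q = qPochhammer x (q ^ 2) * qPochhammer (q * x) (q ^ 2) := by
  have hq2 : ‖q ^ 2‖ < 1 := norm_pow_lt_one hq two_ne_zero
  have even_factor (j : ℕ) : 1 - (q ^ 2) ^ j * x = 1 - q ^ (2 * j) * x := by ring
  have odd_factor (j : ℕ) : 1 - (q ^ 2) ^ j * (q * x) = 1 - q ^ (2 * j + 1) * x := by ring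
  have even_mult := multipliable_one_sub_pow_mul hq2 x
  have odd_mult := multipliable_one_sub_pow_mul hq2 (q * x)
  simp only [even_factor, odd_factor] at even_mult odd_mult
  simp only [qPochhammer, even_factor, odd_factor]
  exact (tprod_even_mul_odd (f := fun j ↦ 1 - q ^ j * x) even_mult odd_mult).symm

lemma qPochhammer_sq_eq_div (hq : ‖q‖ < 1) :
    qPochhammer q (q ^ 2) = eulerFunction q / eulerFunction (q ^ 2) := by
  have hq2 : ‖q ^ 2‖ < 1 := norm_pow_lt_one hq two_ne_zero
  rw [eq_div_iff (eulerFunction_ne_zero hq2), eulerFunction, eulerFunction,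
    qPochhammer_eq_even_mul_odd hq q, ← sq]

lemma qPochhammer_neg_eq_div (hq : ‖q‖ < 1) :
    qPochhammer (-q) q = eulerFunction (q ^ 2) / eulerFunction q := by
  rw [eq_div_iff (eulerFunction_ne_zero hq), mul_comm]
  exact qPochhammer_mul_neg hq q

lemma qPochhammer_neg_sq_eq_div (hq : ‖q‖ < 1) :
    qPochhammer (-q) (q ^ 2) =
      eulerFunction (q ^ 2) ^ 2 / (eulerFunction q * eulerFunction (q ^ 4)) := by
  have hq2 : ‖q ^ 2‖ < 1 := norm_pow_lt_one hq two_ne_zero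
  have h1 := eulerFunction_ne_zero hq
  have h2 := eulerFunction_ne_zero hq2
  have product := qPochhammer_mul_neg hq2 q
  rw [qPochhammer_sq_eq_div hq, qPochhammer_sq_eq_div hq2,
    show (q ^ 2) ^ 2 = q ^ 4 by ring] at product
  field_simp at product ⊢
  exact product

lemma qPochhammer_mul_cubeRoot_mul_cubeRoot_sq (hq : ‖q‖ < 1) {x ω : ℂ} (hx : ‖x‖ < 1)
    (hω : ω ^ 2 + ω + 1 = 0) :
    qPochhammer (x * ω) q * qPochhammer (x * ω ^ 2) q =
      qPochhammer (x ^ 3) (q ^ 3) / qPochhammer x q := by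
  rw [eq_div_iff (qPochhammer_ne_zero hq hx), mul_comm, qPochhammer_mul_cubeRoots hq x hω]

lemma qPochhammer_zpow_eq_zero (hq0 : q ≠ 0) {m : ℤ} (hm : m ≤ 0) :
    qPochhammer (q ^ m) q = 0 := by
  obtain ⟨n, rfl⟩ := Int.exists_eq_neg_ofNat hm
  exact tprod_of_exists_eq_zero ⟨n, by simp [hq0]⟩

lemma tendsto_qPochhammer_pow (hq : ‖q‖ < 1) :
    Tendsto (fun n : ℕ ↦ qPochhammer (q ^ n) q) atTop (𝓝 1) := by
  have euler_ne_zero : qPochhammer q q ≠ 0 := eulerFunction_ne_zero hq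
  have partial_prod := (multipliable_one_sub_pow_mul hq q).tendsto_prod_tprod_nat
  have quotient := (tendsto_const_nhds (x := qPochhammer q q)).div partial_prod euler_ne_zero
  rw [← qPochhammer, div_self euler_ne_zero] at quotient
  rw [← tendsto_add_atTop_iff_nat 1]
  refine quotient.congr fun n ↦ ?_
  have split := prod_range_mul_qPochhammer hq q n
  rw [Pi.div_apply, ← split, pow_succ, mul_div_cancel_left₀]
  exact left_ne_zero_of_mul (split ▸ euler_ne_zero)

lemma tendsto_qPochhammer_zpow (hq : ‖q‖ < 1) :
    Tendsto (fun m : ℤ ↦ qPochhammer (q ^ m) q) atTop (𝓝 1) := by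
  rw [← Nat.map_cast_int_atTop, tendsto_map'_iff]
  simpa [Function.comp_def] using tendsto_qPochhammer_pow hq

lemma exists_norm_qPochhammer_zpow_le (hq0 : q ≠ 0) (hq : ‖q‖ < 1) :
    ∃ C : ℝ, ∀ m : ℤ, ‖qPochhammer (q ^ m) q‖ ≤ C := by
  obtain ⟨C, hC⟩ := (tendsto_qPochhammer_pow hq).norm.bddAbove_range
  refine ⟨C, fun m ↦ ?_⟩
  rcases le_total m 0 with hm | hm
  · rw [qPochhammer_zpow_eq_zero hq0 hm, norm_zero]
    exact (norm_nonneg _).trans (hC ⟨0, rfl⟩)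
  · lift m to ℕ using hm
    rw [zpow_natCast]
    exact hC ⟨m, rfl⟩

end QPochhammer

section Theta

variable {q : ℂ}

lemma jtheta_eq_qPochhammer_mul (hq : ‖q‖ < 1) (x : ℂ) :
    jtheta x q = qPochhammer x q * qPochhammer (q * x⁻¹) q := by
  unfold jtheta qPochhammer
  rw [← (multipliable_one_sub_pow_mul hq x).tprod_mul (multipliable_one_sub_pow_mul hq _)]
  exact tprod_congr fun j ↦ by ring

lemma jtheta_inv (hq : ‖q‖ < 1) {x : ℂ} (hx : x ≠ 0) : jtheta x⁻¹ q = -x⁻¹ * jtheta x q := by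
  rw [jtheta_eq_qPochhammer_mul hq, jtheta_eq_qPochhammer_mul hq, qPochhammer_eq_one_sub_mul hq x,
    qPochhammer_eq_one_sub_mul hq x⁻¹, inv_inv]
  field_simp
  ring

lemma jtheta_base_mul_inv (hq0 : q ≠ 0) (hq : ‖q‖ < 1) (x : ℂ) :
    jtheta (q * x⁻¹) q = jtheta x q := by
  rw [jtheta_eq_qPochhammer_mul hq, jtheta_eq_qPochhammer_mul hq, mul_comm]
  field_simp

lemma jtheta_base_mul (hq0 : q ≠ 0) (hq : ‖q‖ < 1) {x : ℂ} (hx : x ≠ 0) :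
    jtheta (q * x) q = -x⁻¹ * jtheta x q := by
  rw [← jtheta_inv hq hx, ← jtheta_base_mul_inv hq0 hq x⁻¹, inv_inv]

lemma tendsto_prod_jtheta (hq : ‖q‖ < 1) (x : ℂ) :
    Tendsto (fun n ↦ ∏ j ∈ Finset.range n, (1 - q ^ j * x) * (1 - q ^ (j + 1) * x⁻¹)) atTop
      (𝓝 (jtheta x q)) := by
  have mult := (multipliable_one_sub_pow_mul hq x).mul (multipliable_one_sub_pow_mul hq (q * x⁻¹))
  refine Multipliable.tendsto_prod_tprod_nat (mult.congr fun j ↦ ?_)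
  ring

end Theta

section TripleProduct

variable {q x : ℂ} {T : ℤ → ℂ}

/-- The `k`-th term of the finite form of the Jacobi triple product with `n` pairs of factors;
up to a factor independent of `k` it is `T k` times the `q`-binomial coefficient
`[2n, n + k]_q`. -/
noncomputable def tripleProductTerm (T : ℤ → ℂ) (q : ℂ) (n : ℕ) (k : ℤ) : ℂ :=
  T k * (qPochhammer (q ^ (n + 1 - k)) q * qPochhammer (q ^ (n + 1 + k)) q)

lemma tripleProductTerm_succ (hq0 : q ≠ 0) (hq : ‖q‖ < 1) (hx : x ≠ 0)
    (hT : ∀ k, T (k + 1) = -x * q ^ k * T k) (n : ℕ) (k : ℤ) :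
    (1 - q ^ (2 * n + 1)) * (1 - q ^ (2 * n + 2)) * tripleProductTerm T q (n + 1) k =
      (1 + q ^ (2 * n + 1)) * tripleProductTerm T q n k -
        q ^ n * x * tripleProductTerm T q n (k - 1) -
        q ^ (n + 1) * x⁻¹ * tripleProductTerm T q n (k + 1) := by
  have step (m : ℤ) : qPochhammer (q ^ m) q = (1 - q ^ m) * qPochhammer (q ^ (m + 1)) q := by
    rw [qPochhammer_eq_one_sub_mul hq, zpow_add_one₀ hq0, mul_comm q]
  have hT_pred : T k = -x * (q ^ k / q) * T (k - 1) := by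
    simpa [zpow_sub_one₀ hq0, div_eq_mul_inv] using hT (k - 1)
  simp only [tripleProductTerm]
  rw [show (n : ℤ) + 1 - (k - 1) = n + 2 - k by ring,
    show (n : ℤ) + 1 + (k + 1) = n + 2 + k by ring,
    show (n : ℤ) + 1 - (k + 1) = n - k by ring, show (n : ℤ) + 1 + (k - 1) = n + k by ring,
    show ((n + 1 : ℕ) : ℤ) + 1 - k = n + 2 - k by push_cast; ring,
    show ((n + 1 : ℕ) : ℤ) + 1 + k = n + 2 + k by push_cast; ring,
    step (n - k), step (n + k), show (n : ℤ) - k + 1 = n + 1 - k by ring,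
    show (n : ℤ) + k + 1 = n + 1 + k by ring, step (n + 1 - k), step (n + 1 + k),
    show (n : ℤ) + 1 - k + 1 = n + 2 - k by ring, show (n : ℤ) + 1 + k + 1 = n + 2 + k by ring,
    hT k, hT_pred]
  simp only [zpow_sub₀ hq0, zpow_add₀ hq0, zpow_natCast, zpow_one]
  field_simp
  ring

lemma hasSum_tripleProductTerm (hq0 : q ≠ 0) (hq : ‖q‖ < 1) (hx : x ≠ 0)
    (hT : ∀ k, T (k + 1) = -x * q ^ k * T k) (n : ℕ) :
    HasSum (tripleProductTerm T q n)
      (T 0 * eulerFunction q * qPochhammer (q ^ (2 * n + 1)) q *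
        ∏ j ∈ Finset.range n, (1 - q ^ j * x) * (1 - q ^ (j + 1) * x⁻¹)) := by
  induction n with
  | zero =>
    convert hasSum_single (0 : ℤ) fun k hk ↦ ?_ using 1
    · simp [tripleProductTerm, eulerFunction, mul_assoc]
    · rcases lt_or_gt_of_ne hk with hk | hk
      · rw [tripleProductTerm, qPochhammer_zpow_eq_zero hq0 (m := _ + k) (by lia), mul_zero,
          mul_zero]
      · rw [tripleProductTerm, qPochhammer_zpow_eq_zero hq0 (m := _ - k) (by lia), zero_mul,
          mul_zero]
  | succ n ih =>
    have factor_ne_zero (m : ℕ) : 1 - q ^ (m + 1) ≠ 0 :=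
      one_sub_ne_zero_of_norm_lt_one (norm_pow_lt_one hq m.succ_ne_zero)
    have shift_down := (Equiv.subRight (1 : ℤ)).hasSum_iff.2 ih
    have shift_up := (Equiv.addRight (1 : ℤ)).hasSum_iff.2 ih
    have combined := ((ih.mul_left (1 + q ^ (2 * n + 1))).sub
      (shift_down.mul_left (q ^ n * x))).sub (shift_up.mul_left (q ^ (n + 1) * x⁻¹))
    have pochhammer_step : (1 - q ^ (2 * n + 1)) * (1 - q ^ (2 * n + 2)) *
        qPochhammer (q ^ (2 * (n + 1) + 1)) q = qPochhammer (q ^ (2 * n + 1)) q := by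
      rw [← prod_range_mul_qPochhammer hq (q ^ (2 * n + 1)) 2, Finset.prod_range_succ,
        Finset.prod_range_one]
      ring_nf
    rw [← hasSum_mul_left_iff (mul_ne_zero (factor_ne_zero (2 * n)) (factor_ne_zero (2 * n + 1)))]
    convert combined.congr_fun (tripleProductTerm_succ hq0 hq hx hT n) using 1
    · rfl
    · rw [Finset.prod_range_succ, ← pochhammer_step]
      field_simp
      ring_nf

theorem mul_eulerFunction_mul_jtheta_eq_tsum (hq0 : q ≠ 0) (hq : ‖q‖ < 1) (hx : x ≠ 0)
    (hT : ∀ k, T (k + 1) = -x * q ^ k * T k) (hT_summable : Summable T) :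
    T 0 * eulerFunction q * jtheta x q = ∑' k, T k := by
  obtain ⟨C, hC⟩ := exists_norm_qPochhammer_zpow_le hq0 hq
  have tendsto_coeff (k : ℤ) : Tendsto (fun n : ℕ ↦ qPochhammer (q ^ (n + 1 + k)) q) atTop (𝓝 1) :=
    (tendsto_qPochhammer_zpow hq).comp <| tendsto_atTop_add_const_right _ _ <|
      tendsto_atTop_add_const_right _ _ tendsto_natCast_atTop_atTop
  have tendsto_product : Tendsto (fun n : ℕ ↦ T 0 * eulerFunction q *
      qPochhammer (q ^ (2 * n + 1)) q *
        ∏ j ∈ Finset.range n, (1 - q ^ j * x) * (1 - q ^ (j + 1) * x⁻¹))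
      atTop (𝓝 (T 0 * eulerFunction q * 1 * jtheta x q)) := by
    have tendsto_odd : Tendsto (fun n : ℕ ↦ 2 * n + 1) atTop atTop :=
      tendsto_atTop_mono (fun n ↦ show n ≤ 2 * n + 1 by lia) tendsto_id
    exact (((tendsto_qPochhammer_pow hq).comp tendsto_odd).const_mul _).mul
      (tendsto_prod_jtheta hq x)
  have tendsto_series : Tendsto (fun n : ℕ ↦ ∑' k, tripleProductTerm T q n k) atTop
      (𝓝 (∑' k, T k * (1 * 1))) := by
    refine tendsto_tsum_of_dominated_convergence (hT_summable.norm.mul_right (C * C))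
      (fun k ↦ ((tendsto_coeff (-k)).mul (tendsto_coeff k)).const_mul (T k))
      (.of_forall fun n k ↦ ?_)
    simp only [tripleProductTerm, norm_mul]
    gcongr
    · exact (norm_nonneg _).trans (hC 0)
    all_goals exact hC _
  have limit_eq := tendsto_nhds_unique tendsto_product
    (tendsto_series.congr fun n ↦ (hasSum_tripleProductTerm hq0 hq hx hT n).tsum_eq)
  simpa using limit_eq

end TripleProduct

section Weierstrass

lemma hasSum_int_prod_of_parity {α : Type*} [AddCommMonoid α] [TopologicalSpace α]
    [ContinuousAdd α] {f : ℤ × ℤ → α} {a b : α}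
    (even : HasSum (fun m : ℤ × ℤ ↦ f (m.1 + m.2, m.1 - m.2)) a)
    (odd : HasSum (fun m : ℤ × ℤ ↦ f (m.1 + m.2 + 1, m.1 - m.2)) b) : HasSum f (a + b) := by
  have even_injective : (fun m : ℤ × ℤ ↦ (m.1 + m.2, m.1 - m.2)).Injective := fun _ _ h ↦ by
    simp only [Prod.mk.injEq] at h
    ext <;> lia
  have odd_injective : (fun m : ℤ × ℤ ↦ (m.1 + m.2 + 1, m.1 - m.2)).Injective := fun _ _ h ↦ by
    simp only [Prod.mk.injEq] at h
    ext <;> lia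
  refine HasSum.add_isCompl ⟨?_, ?_⟩ (even_injective.hasSum_range_iff.2 even)
    (odd_injective.hasSum_range_iff.2 odd)
  · rw [Set.disjoint_left]
    rintro _ ⟨m, rfl⟩ ⟨n, h⟩
    simp only [Prod.mk.injEq] at h
    lia
  · rw [codisjoint_iff_le_sup]
    rintro ⟨m, n⟩ -
    rcases Int.even_or_odd' (m + n) with ⟨k, h | h⟩
    · exact .inl ⟨(k, m - k), by simp only [Prod.mk.injEq]; lia⟩
    · exact .inr ⟨(k, m - k - 1), by simp only [Prod.mk.injEq]; lia⟩

lemma hasSum_jacobiTheta₂_term_mul {τ : ℂ} (hτ : 0 < τ.im) (z w : ℂ) :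
    HasSum (fun m : ℤ × ℤ ↦ jacobiTheta₂_term m.1 z τ * jacobiTheta₂_term m.2 w τ)
      (jacobiTheta₂ z τ * jacobiTheta₂ w τ) := by
  have summable (u : ℂ) := ((summable_jacobiTheta₂_term_iff u τ).2 hτ).norm
  rw [jacobiTheta₂, jacobiTheta₂, tsum_mul_tsum_of_summable_norm (summable z) (summable w)]
  exact (summable_mul_of_summable_norm (summable z) (summable w)).hasSum

theorem jacobiTheta₂_add_mul_jacobiTheta₂_sub {τ : ℂ} (hτ : 0 < τ.im) (z w : ℂ) :
    jacobiTheta₂ (z + w) τ * jacobiTheta₂ (z - w) τ =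
      jacobiTheta₂ (2 * z) (2 * τ) * jacobiTheta₂ (2 * w) (2 * τ) +
        cexp (π * I * τ + 2 * π * I * (z + w)) *
          (jacobiTheta₂ (2 * z + τ) (2 * τ) * jacobiTheta₂ (2 * w + τ) (2 * τ)) := by
  have h2τ : 0 < (2 * τ).im := by simpa using hτ
  refine (hasSum_jacobiTheta₂_term_mul hτ (z + w) (z - w)).unique (hasSum_int_prod_of_parity
    ((hasSum_jacobiTheta₂_term_mul h2τ (2 * z) (2 * w)).congr_fun fun m ↦ ?_)
    (((hasSum_jacobiTheta₂_term_mul h2τ (2 * z + τ) (2 * w + τ)).mul_left _).congr_fun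
      fun m ↦ ?_))
  all_goals
    simp only [jacobiTheta₂_term, ← Complex.exp_add]
    push_cast
    ring_nf

theorem eulerFunction_mul_jtheta_eq_jacobiTheta₂ {τ : ℂ} (hτ : 0 < τ.im) (z : ℂ) :
    eulerFunction (cexp (2 * π * I * τ)) *
        jtheta (-cexp (π * I * τ + 2 * π * I * z)) (cexp (2 * π * I * τ)) =
      jacobiTheta₂ z τ := by
  have term_succ (k : ℤ) : jacobiTheta₂_term (k + 1) z τ =
      -(-cexp (π * I * τ + 2 * π * I * z)) * cexp (2 * π * I * τ) ^ k *
        jacobiTheta₂_term k z τ := by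
    rw [neg_neg, ← exp_int_mul, jacobiTheta₂_term, jacobiTheta₂_term, ← Complex.exp_add,
      ← Complex.exp_add]
    push_cast
    ring_nf
  simpa [jacobiTheta₂_term, jacobiTheta₂] using
    mul_eulerFunction_mul_jtheta_eq_tsum (Complex.exp_ne_zero _)
      (UpperHalfPlane.norm_exp_two_pi_I_lt_one ⟨τ, hτ⟩) (neg_ne_zero.2 (Complex.exp_ne_zero _))
      term_succ ((summable_jacobiTheta₂_term_iff z τ).2 hτ)

lemma eulerFunction_mul_jtheta_cexp {τ : ℂ} (hτ : 0 < τ.im) (z : ℂ) :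
    eulerFunction (cexp (2 * π * I * τ)) *
        jtheta (cexp (2 * π * I * z)) (cexp (2 * π * I * τ)) =
      jacobiTheta₂ (z - τ / 2 - 1 / 2) τ := by
  rw [← eulerFunction_mul_jtheta_eq_jacobiTheta₂ hτ,
    show π * I * τ + 2 * π * I * (z - τ / 2 - 1 / 2) = 2 * π * I * z - π * I by ring,
    Complex.exp_sub_pi_mul_I, neg_neg]

theorem jtheta_cexp_add_mul_jtheta_cexp_sub {τ : ℂ} (hτ : 0 < τ.im) (z w : ℂ) :
    eulerFunction (cexp (2 * π * I * τ)) ^ 2 *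
        (jtheta (cexp (2 * π * I * (z + w))) (cexp (2 * π * I * τ)) *
          jtheta (cexp (2 * π * I * (z - w))) (cexp (2 * π * I * τ))) =
      cexp (2 * π * I * z) *
        (cexp (2 * π * I * z) * jacobiTheta₂ (2 * z + τ) (2 * τ) * jacobiTheta₂ (2 * w) (2 * τ) -
          jacobiTheta₂ (2 * z) (2 * τ) *
            (cexp (2 * π * I * w) * jacobiTheta₂ (2 * w + τ) (2 * τ))) := by
  have quasi_period : jacobiTheta₂ (2 * (z - τ / 2 - 1 / 2)) (2 * τ) =
      cexp (2 * π * I * z) ^ 2 * jacobiTheta₂ (2 * z + τ) (2 * τ) := by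
    have shift := jacobiTheta₂_add_left' (2 * z - τ) (2 * τ)
    rw [show 2 * z - τ + 2 * τ = 2 * z + τ by ring,
      show -π * I * (2 * τ + 2 * (2 * z - τ)) = -(2 * π * I * z + 2 * π * I * z) by ring,
      Complex.exp_neg, Complex.exp_add] at shift
    rw [shift, ← jacobiTheta₂_add_left]
    field_simp
    ring_nf
  have period : jacobiTheta₂ (2 * (z - τ / 2 - 1 / 2) + τ) (2 * τ) =
      jacobiTheta₂ (2 * z) (2 * τ) := by
    rw [← jacobiTheta₂_add_left]
    ring_nf
  have prefactor : cexp (π * I * τ + 2 * π * I * (z - τ / 2 - 1 / 2 + w)) =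
      -(cexp (2 * π * I * z) * cexp (2 * π * I * w)) := by
    rw [show π * I * τ + 2 * π * I * (z - τ / 2 - 1 / 2 + w) =
      2 * π * I * z + 2 * π * I * w - π * I by ring, Complex.exp_sub_pi_mul_I, Complex.exp_add]
  have product := jacobiTheta₂_add_mul_jacobiTheta₂_sub hτ (z - τ / 2 - 1 / 2) w
  rw [quasi_period, period, prefactor, show z - τ / 2 - 1 / 2 + w = z + w - τ / 2 - 1 / 2 by ring,
    show z - τ / 2 - 1 / 2 - w = z - w - τ / 2 - 1 / 2 by ring,
    ← eulerFunction_mul_jtheta_cexp hτ, ← eulerFunction_mul_jtheta_cexp hτ] at product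
  linear_combination product

lemma exists_cexp_two_pi_I_mul_eq {a : ℂ} (ha : a ≠ 0) : ∃ z, cexp (2 * π * I * z) = a :=
  ⟨Complex.log a / (2 * π * I), by
    rw [mul_div_cancel₀ _ Complex.two_pi_I_ne_zero, Complex.exp_log ha]⟩

lemma exists_im_pos_cexp_two_pi_I_mul_eq {q : ℂ} (hq0 : q ≠ 0) (hq : ‖q‖ < 1) :
    ∃ τ : ℂ, 0 < τ.im ∧ cexp (2 * π * I * τ) = q := by
  refine ⟨Function.Periodic.invQParam 1 q,
    Function.Periodic.im_invQParam_pos_of_norm_lt_one one_pos hq hq0, ?_⟩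
  simpa [Function.Periodic.qParam] using Function.Periodic.qParam_right_inv one_ne_zero hq0

theorem jtheta_weierstrass {q a b c d : ℂ} (hq0 : q ≠ 0) (hq : ‖q‖ < 1) (ha : a ≠ 0) (hb : b ≠ 0)
    (hc : c ≠ 0) (hd : d ≠ 0) :
    b * (jtheta (a * b) q * jtheta (a / b) q) * (jtheta (c * d) q * jtheta (c / d) q) -
        c * (jtheta (a * c) q * jtheta (a / c) q) * (jtheta (b * d) q * jtheta (b / d) q) +
        c * (jtheta (a * d) q * jtheta (a / d) q) * (jtheta (b * c) q * jtheta (b / c) q) = 0 := by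
  obtain ⟨τ, hτ, rfl⟩ := exists_im_pos_cexp_two_pi_I_mul_eq hq0 hq
  obtain ⟨α, rfl⟩ := exists_cexp_two_pi_I_mul_eq ha
  obtain ⟨β, rfl⟩ := exists_cexp_two_pi_I_mul_eq hb
  obtain ⟨γ, rfl⟩ := exists_cexp_two_pi_I_mul_eq hc
  obtain ⟨δ, rfl⟩ := exists_cexp_two_pi_I_mul_eq hd
  simp only [← Complex.exp_add, ← Complex.exp_sub, ← mul_add, ← mul_sub]
  have alternating (z w : ℂ) :=
    (eq_inv_mul_iff_mul_eq₀ (pow_ne_zero 2 (eulerFunction_ne_zero hq))).2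
      (jtheta_cexp_add_mul_jtheta_cexp_sub hτ z w)
  simp only [alternating]
  ring

end Weierstrass

section QuarticRelations

variable {p q x : ℂ}

lemma jtheta_neg_inv (hq : ‖q‖ < 1) (hx : x ≠ 0) : jtheta (-x⁻¹) q = x⁻¹ * jtheta (-x) q := by
  rw [← inv_neg, jtheta_inv hq (neg_ne_zero.2 hx), inv_neg, neg_neg]

lemma jtheta_mul_inv_eq_jtheta_mul (hp0 : p ≠ 0) (hp : ‖p‖ < 1) (hx : x ≠ 0) :
    jtheta (p * x⁻¹) (p ^ 2) = jtheta (p * x) (p ^ 2) := by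
  rw [← jtheta_base_mul_inv (pow_ne_zero 2 hp0) (norm_pow_lt_one hp two_ne_zero) (p * x)]
  congr 1
  field_simp

lemma jtheta_neg_mul_inv_eq_jtheta_neg_mul (hp0 : p ≠ 0) (hp : ‖p‖ < 1) (hx : x ≠ 0) :
    jtheta (-(p * x⁻¹)) (p ^ 2) = jtheta (-(p * x)) (p ^ 2) := by
  simpa using jtheta_mul_inv_eq_jtheta_mul hp0 hp (neg_ne_zero.2 hx)

theorem jtheta_neg_pow_four_sub_jtheta_pow_four (hq0 : q ≠ 0) (hq : ‖q‖ < 1) (hx : x ≠ 0) :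
    jtheta (-x) q ^ 4 - jtheta x q ^ 4 = x * jtheta (-1) q ^ 3 * jtheta (-x ^ 2) q := by
  have weierstrass := jtheta_weierstrass hq0 hq one_ne_zero (neg_ne_zero.2 one_ne_zero) hx
    (neg_ne_zero.2 hx)
  simp only [one_mul, neg_mul, mul_neg, div_neg, neg_div, one_div, neg_neg, inv_one, div_self hx,
    ← sq, jtheta_inv hq hx, jtheta_neg_inv hq hx] at weierstrass
  field_simp at weierstrass
  linear_combination weierstrass

theorem jtheta_neg_mul_pow_four (hp0 : p ≠ 0) (hp : ‖p‖ < 1) (hx : x ≠ 0) :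
    jtheta (-(p * x)) (p ^ 2) ^ 4 =
      jtheta (-p) (p ^ 2) ^ 3 * jtheta (-(p * x ^ 2)) (p ^ 2) -
        p / x ^ 2 * jtheta x (p ^ 2) ^ 4 := by
  have hpx := mul_ne_zero hp0 hx
  have hq0 := pow_ne_zero 2 hp0
  have hq := norm_pow_lt_one hp two_ne_zero
  have weierstrass := jtheta_weierstrass hq0 hq one_ne_zero (neg_ne_zero.2 hp0) hx
    (neg_ne_zero.2 hpx)
  simp only [one_mul, neg_mul, mul_neg, div_neg, neg_div, one_div, neg_neg,
    show x * (p * x) = p * x ^ 2 by ring, show x / (p * x) = p⁻¹ by field_simp,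
    show p * (p * x) = p ^ 2 * x by ring, show p / (p * x) = x⁻¹ by field_simp,
    div_eq_mul_inv p x, jtheta_inv hq hx, jtheta_neg_inv hq hp0, jtheta_neg_inv hq hpx,
    jtheta_base_mul hq0 hq hx, jtheta_neg_mul_inv_eq_jtheta_neg_mul hp0 hp hx] at weierstrass
  field_simp at weierstrass ⊢
  linear_combination weierstrass

theorem jtheta_neg_mul_sq_mul_jtheta_neg_sq (hp0 : p ≠ 0) (hp : ‖p‖ < 1) (hx : x ≠ 0) :
    jtheta (-(p * x)) (p ^ 2) ^ 2 * jtheta (-x ^ 2) (p ^ 2) * jtheta (-1) (p ^ 2) =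
      jtheta x (p ^ 2) ^ 2 * jtheta p (p ^ 2) * jtheta (p * x ^ 2) (p ^ 2) +
        jtheta (-x) (p ^ 2) ^ 2 * jtheta (-p) (p ^ 2) * jtheta (-(p * x ^ 2)) (p ^ 2) := by
  have hpx := mul_ne_zero hp0 hx
  have hq := norm_pow_lt_one hp two_ne_zero
  have weierstrass := jtheta_weierstrass (pow_ne_zero 2 hp0) hq one_ne_zero hx (neg_ne_zero.2 hx)
    (neg_ne_zero.2 hpx)
  simp only [one_mul, neg_mul, mul_neg, div_neg, neg_div, one_div, neg_neg, div_self hx, ← sq,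
    show x * (p * x) = p * x ^ 2 by ring, show x / (p * x) = p⁻¹ by field_simp,
    jtheta_inv hq hx, jtheta_inv hq hp0, jtheta_neg_inv hq hx, jtheta_neg_inv hq hp0,
    jtheta_neg_inv hq hpx] at weierstrass
  field_simp at weierstrass ⊢
  linear_combination -weierstrass

theorem mul_jtheta_neg_one_sq_mul_jtheta_neg_mul_sq (hp0 : p ≠ 0) (hp : ‖p‖ < 1) (hx : x ≠ 0) :
    x * jtheta (-1) (p ^ 2) ^ 2 * jtheta (-(p * x)) (p ^ 2) ^ 2 =
      jtheta (-p) (p ^ 2) ^ 2 * jtheta (-x) (p ^ 2) ^ 2 -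
        jtheta p (p ^ 2) ^ 2 * jtheta x (p ^ 2) ^ 2 := by
  have hq := norm_pow_lt_one hp two_ne_zero
  have weierstrass := jtheta_weierstrass (pow_ne_zero 2 hp0) hq one_ne_zero
    (neg_ne_zero.2 one_ne_zero) (neg_ne_zero.2 hp0) hx
  simp only [one_mul, neg_mul, mul_neg, div_neg, neg_div, one_div, neg_neg, inv_one,
    div_eq_mul_inv p x, jtheta_inv hq hx, jtheta_inv hq hp0, jtheta_neg_inv hq hx,
    jtheta_neg_inv hq hp0, jtheta_neg_mul_inv_eq_jtheta_neg_mul hp0 hp hx] at weierstrass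
  field_simp at weierstrass
  linear_combination -weierstrass

end QuarticRelations

section CubeRoot

variable {p q ω : ℂ}

lemma cubeRoot_pow_three (hω : ω ^ 2 + ω + 1 = 0) : ω ^ 3 = 1 := by
  linear_combination (ω - 1) * hω

lemma one_sub_cubeRoot_sq (hω : ω ^ 2 + ω + 1 = 0) : (1 - ω) ^ 2 = -3 * ω := by
  linear_combination hω

lemma one_sub_cubeRoot_pow_four (hω : ω ^ 2 + ω + 1 = 0) : (1 - ω) ^ 4 = 9 * ω ^ 2 := by
  rw [pow_mul (1 - ω) 2 2, one_sub_cubeRoot_sq hω]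
  ring

lemma cubeRoot_ne_zero (hω : ω ^ 2 + ω + 1 = 0) : ω ≠ 0 := by
  rintro rfl
  simp at hω

lemma cubeRoot_inv (hω : ω ^ 2 + ω + 1 = 0) : ω⁻¹ = ω ^ 2 :=
  inv_eq_of_mul_eq_one_right (by linear_combination cubeRoot_pow_three hω)

lemma jtheta_neg_cubeRoot_sq (hq : ‖q‖ < 1) (hω : ω ^ 2 + ω + 1 = 0) :
    jtheta (-ω ^ 2) q = ω ^ 2 * jtheta (-ω) q := by
  rw [← cubeRoot_inv hω, jtheta_neg_inv hq (cubeRoot_ne_zero hω)]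

lemma jtheta_mul_cubeRoot_sq (hp0 : p ≠ 0) (hp : ‖p‖ < 1) (hω : ω ^ 2 + ω + 1 = 0) :
    jtheta (p * ω ^ 2) (p ^ 2) = jtheta (p * ω) (p ^ 2) := by
  rw [← cubeRoot_inv hω, jtheta_mul_inv_eq_jtheta_mul hp0 hp (cubeRoot_ne_zero hω)]

lemma jtheta_neg_mul_cubeRoot_sq (hp0 : p ≠ 0) (hp : ‖p‖ < 1) (hω : ω ^ 2 + ω + 1 = 0) :
    jtheta (-(p * ω ^ 2)) (p ^ 2) = jtheta (-(p * ω)) (p ^ 2) := by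
  rw [← cubeRoot_inv hω, jtheta_neg_mul_inv_eq_jtheta_neg_mul hp0 hp (cubeRoot_ne_zero hω)]

end CubeRoot

section TorsionValues

variable {q ω : ℂ}

lemma jtheta_neg_one (hq : ‖q‖ < 1) :
    jtheta (-1) q = 2 * (eulerFunction (q ^ 2) / eulerFunction q) ^ 2 := by
  rw [jtheta_eq_qPochhammer_mul hq, qPochhammer_eq_one_sub_mul hq (-1), inv_neg_one, mul_neg_one,
    qPochhammer_neg_eq_div hq]
  ring

lemma jtheta_self_sq (hq0 : q ≠ 0) (hq : ‖q‖ < 1) :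
    jtheta q (q ^ 2) = qPochhammer q (q ^ 2) ^ 2 := by
  rw [jtheta_eq_qPochhammer_mul (norm_pow_lt_one hq two_ne_zero), sq q, mul_inv_cancel_right₀ hq0,
    ← sq]

lemma jtheta_mul_cubeRoot (hq0 : q ≠ 0) (hq : ‖q‖ < 1) (hω : ω ^ 2 + ω + 1 = 0) :
    jtheta (q * ω) (q ^ 2) = qPochhammer (q ^ 3) (q ^ 6) / qPochhammer q (q ^ 2) := by
  have hq2 : ‖q ^ 2‖ < 1 := norm_pow_lt_one hq two_ne_zero
  rw [show q ^ 6 = (q ^ 2) ^ 3 by ring, ← qPochhammer_mul_cubeRoot_mul_cubeRoot_sq hq2 hq hω,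
    jtheta_eq_qPochhammer_mul hq2, mul_inv, cubeRoot_inv hω, ← mul_assoc, sq q,
    mul_inv_cancel_right₀ hq0]

lemma jtheta_cubeRoot (hq : ‖q‖ < 1) (hω : ω ^ 2 + ω + 1 = 0) :
    jtheta ω q = (1 - ω) * (eulerFunction (q ^ 3) / eulerFunction q) := by
  rw [eulerFunction, eulerFunction, ← qPochhammer_mul_cubeRoot_mul_cubeRoot_sq hq hq hω,
    ← mul_assoc, ← qPochhammer_eq_one_sub_mul hq, jtheta_eq_qPochhammer_mul hq, cubeRoot_inv hω]

lemma jtheta_neg_cubeRoot (hq : ‖q‖ < 1) (hω : ω ^ 2 + ω + 1 = 0) :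
    jtheta (-ω) q = -ω ^ 2 * (eulerFunction (q ^ 6) * eulerFunction q /
      (eulerFunction (q ^ 3) * eulerFunction (q ^ 2))) := by
  have hq_neg : ‖-q‖ < 1 := by rwa [norm_neg]
  have cubic := qPochhammer_mul_cubeRoot_mul_cubeRoot_sq hq hq_neg hω
  rw [Odd.neg_pow (by decide), qPochhammer_neg_eq_div hq,
    qPochhammer_neg_eq_div (norm_pow_lt_one hq three_ne_zero), ← pow_mul, neg_mul, neg_mul] at cubic
  rw [jtheta_eq_qPochhammer_mul hq, qPochhammer_eq_one_sub_mul hq, inv_neg, cubeRoot_inv hω,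
    mul_neg, mul_neg, mul_assoc, cubic, show 1 - -ω = -ω ^ 2 by linear_combination hω]
  field_simp

end TorsionValues

section EtaQuotients

/-- The nome `e^{πiτ}`, written `p` in the definition of the Hauptmodul. -/
noncomputable def nome (τ : ℂ) : ℂ := cexp (π * I * τ)

/-- The 24th root `e^{πiτ/24}` of the nome, of which every `η(nτ/2)` contains an integral power. -/
noncomputable def nomeRoot (τ : ℂ) : ℂ := cexp (π * I * τ / 24)

variable {τ ω : ℂ}

lemma nome_ne_zero : nome τ ≠ 0 := Complex.exp_ne_zero _

lemma nomeRoot_ne_zero : nomeRoot τ ≠ 0 := Complex.exp_ne_zero _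

lemma norm_nome_lt_one (hτ : 0 < τ.im) : ‖nome τ‖ < 1 := by
  rw [nome, Complex.norm_exp, Real.exp_lt_one_iff]
  simpa using mul_pos Real.pi_pos hτ

lemma nome_eq_nomeRoot_pow (τ : ℂ) : nome τ = nomeRoot τ ^ 24 := by
  rw [nome, nomeRoot, ← Complex.exp_nat_mul]
  ring_nf

lemma eulerFunction_nome_pow_ne_zero (hτ : 0 < τ.im) {n : ℕ} (hn : n ≠ 0) :
    eulerFunction (nome τ ^ n) ≠ 0 :=
  eulerFunction_ne_zero (norm_pow_lt_one (norm_nome_lt_one hτ) hn)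

lemma dedekindEta_eq_of_two_mul_eq {σ : ℂ} (n : ℕ) (hσ : 2 * σ = n * τ) :
    dedekindEta σ = nomeRoot τ ^ n * eulerFunction (nome τ ^ n) := by
  have hσ : σ = n * τ / 2 := by linear_combination hσ / 2
  rw [hσ, dedekindEta, eulerFunction, qPochhammer, nome, nomeRoot]
  congr 1
  · rw [← Complex.exp_nat_mul]
    ring_nf
  · refine tprod_congr fun j ↦ ?_
    rw [← pow_succ, ← pow_mul, ← Complex.exp_nat_mul]
    push_cast
    ring_nf

lemma dedekindEta_ne_zero (hτ : 0 < τ.im) : dedekindEta τ ≠ 0 := by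
  rw [dedekindEta_eq_of_two_mul_eq (τ := τ) 2 (by norm_num)]
  exact mul_ne_zero (pow_ne_zero _ nomeRoot_ne_zero)
    (eulerFunction_nome_pow_ne_zero hτ two_ne_zero)

lemma phi1_ne_zero (hτ : 0 < τ.im) : phi1 τ ≠ 0 :=
  div_ne_zero (pow_ne_zero 2 (dedekindEta_ne_zero (by simpa using hτ)))
    (pow_ne_zero 2 (dedekindEta_ne_zero hτ))

lemma phi2_ne_zero (hτ : 0 < τ.im) : phi2 τ ≠ 0 :=
  div_ne_zero (pow_ne_zero 2 (dedekindEta_ne_zero (by simpa using hτ)))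
    (pow_ne_zero 2 (dedekindEta_ne_zero hτ))

lemma phi3_ne_zero (hτ : 0 < τ.im) : phi3 τ ≠ 0 :=
  div_ne_zero (dedekindEta_ne_zero (by simpa using hτ)) (dedekindEta_ne_zero (by simpa using hτ))

lemma phi4_ne_zero (hτ : 0 < τ.im) : phi4 τ ≠ 0 :=
  div_ne_zero (dedekindEta_ne_zero (by simpa using hτ)) (dedekindEta_ne_zero (by simpa using hτ))

lemma phi5_ne_zero (hτ : 0 < τ.im) : phi5 τ ≠ 0 :=
  div_ne_zero (dedekindEta_ne_zero (by simpa using hτ)) (dedekindEta_ne_zero hτ)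

lemma phi1_eq_eulerFunction_div (τ : ℂ) :
    phi1 τ = eulerFunction (nome τ) ^ 2 / (nomeRoot τ ^ 2 * eulerFunction (nome τ ^ 2) ^ 2) := by
  rw [phi1, dedekindEta_eq_of_two_mul_eq (σ := τ / 2) (τ := τ) 1 (by push_cast; ring),
    dedekindEta_eq_of_two_mul_eq (σ := τ) (τ := τ) 2 (by norm_num), pow_one, pow_one]
  field_simp

lemma phi2_eq_eulerFunction_div (τ : ℂ) :
    phi2 τ = nomeRoot τ ^ 4 * eulerFunction (nome τ ^ 4) ^ 2 / eulerFunction (nome τ ^ 2) ^ 2 := by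
  rw [phi2, dedekindEta_eq_of_two_mul_eq (σ := 2 * τ) (τ := τ) 4 (by push_cast; ring),
    dedekindEta_eq_of_two_mul_eq (σ := τ) (τ := τ) 2 (by norm_num)]
  field_simp

lemma phi3_eq_eulerFunction_div (τ : ℂ) :
    phi3 τ = nomeRoot τ ^ 2 * eulerFunction (nome τ ^ 3) / eulerFunction (nome τ) := by
  rw [phi3, dedekindEta_eq_of_two_mul_eq (σ := 3 * τ / 2) (τ := τ) 3 (by push_cast; ring),
    dedekindEta_eq_of_two_mul_eq (σ := τ / 2) (τ := τ) 1 (by push_cast; ring), pow_one, pow_one]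
  field_simp

lemma phi4_eq_eulerFunction_div (τ : ℂ) :
    phi4 τ = nomeRoot τ ^ 8 * eulerFunction (nome τ ^ 12) / eulerFunction (nome τ ^ 4) := by
  rw [phi4, dedekindEta_eq_of_two_mul_eq (σ := 6 * τ) (τ := τ) 12 (by push_cast; ring),
    dedekindEta_eq_of_two_mul_eq (σ := 2 * τ) (τ := τ) 4 (by push_cast; ring)]
  field_simp

lemma phi5_eq_eulerFunction_div (τ : ℂ) :
    phi5 τ = nomeRoot τ ^ 4 * eulerFunction (nome τ ^ 6) / eulerFunction (nome τ ^ 2) := by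
  rw [phi5, dedekindEta_eq_of_two_mul_eq (σ := 3 * τ) (τ := τ) 6 (by push_cast; ring),
    dedekindEta_eq_of_two_mul_eq (σ := τ) (τ := τ) 2 (by norm_num)]
  field_simp

lemma jtheta_neg_one_nome_sq (hτ : 0 < τ.im) :
    jtheta (-1) (nome τ ^ 2) = 2 * phi2 τ / nomeRoot τ ^ 4 := by
  have := nomeRoot_ne_zero (τ := τ)
  rw [jtheta_neg_one (norm_pow_lt_one (norm_nome_lt_one hτ) two_ne_zero), ← pow_mul,
    phi2_eq_eulerFunction_div]
  field_simp

lemma jtheta_nome (hτ : 0 < τ.im) : jtheta (nome τ) (nome τ ^ 2) = nomeRoot τ ^ 2 * phi1 τ := by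
  have := nomeRoot_ne_zero (τ := τ)
  rw [jtheta_self_sq nome_ne_zero (norm_nome_lt_one hτ),
    qPochhammer_sq_eq_div (norm_nome_lt_one hτ), phi1_eq_eulerFunction_div]
  field_simp

lemma jtheta_neg_nome (hτ : 0 < τ.im) :
    jtheta (-nome τ) (nome τ ^ 2) = nomeRoot τ ^ 2 / (phi1 τ * phi2 τ) := by
  have := nomeRoot_ne_zero (τ := τ)
  have theta := jtheta_self_sq (neg_ne_zero.2 nome_ne_zero)
    ((norm_neg _).trans_lt (norm_nome_lt_one hτ))
  rw [neg_sq, qPochhammer_neg_sq_eq_div (norm_nome_lt_one hτ)] at theta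
  rw [theta, phi1_eq_eulerFunction_div, phi2_eq_eulerFunction_div]
  field_simp

lemma jtheta_cubeRoot_nome_sq (hτ : 0 < τ.im) (hω : ω ^ 2 + ω + 1 = 0) :
    jtheta ω (nome τ ^ 2) = (1 - ω) * phi5 τ / nomeRoot τ ^ 4 := by
  have := nomeRoot_ne_zero (τ := τ)
  rw [jtheta_cubeRoot (norm_pow_lt_one (norm_nome_lt_one hτ) two_ne_zero) hω, ← pow_mul,
    phi5_eq_eulerFunction_div]
  field_simp

lemma jtheta_neg_cubeRoot_nome_sq (hτ : 0 < τ.im) (hω : ω ^ 2 + ω + 1 = 0) :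
    jtheta (-ω) (nome τ ^ 2) = -ω ^ 2 * phi4 τ / (nomeRoot τ ^ 4 * phi5 τ) := by
  have := nomeRoot_ne_zero (τ := τ)
  rw [jtheta_neg_cubeRoot (norm_pow_lt_one (norm_nome_lt_one hτ) two_ne_zero) hω, ← pow_mul,
    ← pow_mul, ← pow_mul, phi4_eq_eulerFunction_div, phi5_eq_eulerFunction_div]
  field_simp

lemma jtheta_nome_mul_cubeRoot (hτ : 0 < τ.im) (hω : ω ^ 2 + ω + 1 = 0) :
    jtheta (nome τ * ω) (nome τ ^ 2) = nomeRoot τ ^ 2 * phi3 τ / phi5 τ := by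
  have := nomeRoot_ne_zero (τ := τ)
  have hp := norm_nome_lt_one hτ
  rw [jtheta_mul_cubeRoot nome_ne_zero hp hω, show nome τ ^ 6 = (nome τ ^ 3) ^ 2 by ring,
    qPochhammer_sq_eq_div hp, qPochhammer_sq_eq_div (norm_pow_lt_one hp three_ne_zero), ← pow_mul,
    phi3_eq_eulerFunction_div, phi5_eq_eulerFunction_div]
  field_simp

lemma jtheta_neg_nome_mul_cubeRoot (hτ : 0 < τ.im) (hω : ω ^ 2 + ω + 1 = 0) :
    jtheta (-(nome τ * ω)) (nome τ ^ 2) = nomeRoot τ ^ 2 * phi5 τ ^ 2 / (phi3 τ * phi4 τ) := by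
  have := nomeRoot_ne_zero (τ := τ)
  have hp := norm_nome_lt_one hτ
  have theta := jtheta_mul_cubeRoot (neg_ne_zero.2 nome_ne_zero) ((norm_neg _).trans_lt hp) hω
  rw [neg_mul, neg_sq, Odd.neg_pow (by decide), Even.neg_pow (by decide),
    show nome τ ^ 6 = (nome τ ^ 3) ^ 2 by ring, qPochhammer_neg_sq_eq_div hp,
    qPochhammer_neg_sq_eq_div (norm_pow_lt_one hp three_ne_zero), ← pow_mul, ← pow_mul] at theta
  rw [theta, phi3_eq_eulerFunction_div, phi4_eq_eulerFunction_div, phi5_eq_eulerFunction_div]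
  field_simp

end EtaQuotients

section PhiRelations

variable {τ : ℂ}

lemma cexp_two_pi_I_div_three_sq_add_self_add_one :
    cexp (2 * π * I / 3) ^ 2 + cexp (2 * π * I / 3) + 1 = 0 := by
  have geom_sum := (Complex.isPrimitiveRoot_exp 3 three_ne_zero).geom_sum_eq_zero (by norm_num)
  simp only [Finset.sum_range_succ, Finset.sum_range_zero, Nat.cast_ofNat] at geom_sum
  linear_combination geom_sum

lemma nine_mul_phi5_pow_eight (hτ : 0 < τ.im) :
    9 * phi5 τ ^ 8 = phi4 τ ^ 4 + 8 * phi2 τ ^ 3 * phi4 τ * phi5 τ ^ 3 := by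
  obtain ⟨ω, hω⟩ : ∃ ω : ℂ, ω ^ 2 + ω + 1 = 0 := ⟨_, cexp_two_pi_I_div_three_sq_add_self_add_one⟩
  have hω0 := cubeRoot_ne_zero hω
  have hr := nomeRoot_ne_zero (τ := τ)
  have h5 := phi5_ne_zero hτ
  have hq := norm_pow_lt_one (norm_nome_lt_one hτ) two_ne_zero
  have theta := jtheta_neg_pow_four_sub_jtheta_pow_four (pow_ne_zero 2 nome_ne_zero) hq hω0
  rw [jtheta_neg_cubeRoot_sq hq hω, jtheta_neg_one_nome_sq hτ, jtheta_cubeRoot_nome_sq hτ hω,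
    jtheta_neg_cubeRoot_nome_sq hτ hω] at theta
  field_simp at theta
  refine mul_left_cancel₀ (pow_ne_zero 2 hω0) ?_
  linear_combination -theta - phi5 τ ^ 8 * one_sub_cubeRoot_pow_four hω +
    ω ^ 2 * (phi4 τ ^ 4 * (ω ^ 3 + 1) + 8 * phi2 τ ^ 3 * phi4 τ * phi5 τ ^ 3) *
      cubeRoot_pow_three hω

lemma phi1_pow_three_mul_phi2_pow_three_mul_phi5_pow_six (hτ : 0 < τ.im) :
    phi1 τ ^ 3 * phi2 τ ^ 3 * phi5 τ ^ 6 =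
      phi3 τ ^ 3 * phi4 τ ^ 3 -
        9 * phi1 τ ^ 3 * phi2 τ ^ 3 * phi3 τ ^ 4 * phi4 τ ^ 4 * phi5 τ ^ 2 := by
  obtain ⟨ω, hω⟩ : ∃ ω : ℂ, ω ^ 2 + ω + 1 = 0 := ⟨_, cexp_two_pi_I_div_three_sq_add_self_add_one⟩
  have hω0 := cubeRoot_ne_zero hω
  have hr := nomeRoot_ne_zero (τ := τ)
  have h1 := phi1_ne_zero hτ
  have h2 := phi2_ne_zero hτ
  have h3 := phi3_ne_zero hτ
  have h4 := phi4_ne_zero hτ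
  have h5 := phi5_ne_zero hτ
  have hp := norm_nome_lt_one hτ
  have theta := jtheta_neg_mul_pow_four nome_ne_zero hp hω0
  rw [jtheta_neg_mul_cubeRoot_sq nome_ne_zero hp hω, jtheta_neg_nome_mul_cubeRoot hτ hω,
    jtheta_neg_nome hτ, jtheta_cubeRoot_nome_sq hτ hω, nome_eq_nomeRoot_pow] at theta
  field_simp at theta
  refine mul_left_cancel₀ (pow_ne_zero 2 hω0) ?_
  linear_combination theta - phi1 τ ^ 3 * phi2 τ ^ 3 * phi3 τ ^ 4 * phi4 τ ^ 4 * phi5 τ ^ 2 *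
    one_sub_cubeRoot_pow_four hω

lemma three_mul_phi1_sq_mul_phi2_mul_phi3_pow_three (hτ : 0 < τ.im) :
    3 * phi1 τ ^ 2 * phi2 τ * phi3 τ ^ 3 * phi4 τ * phi5 τ =
      phi3 τ * phi4 τ ^ 2 + 2 * phi1 τ * phi2 τ ^ 2 * phi5 τ ^ 3 := by
  obtain ⟨ω, hω⟩ : ∃ ω : ℂ, ω ^ 2 + ω + 1 = 0 := ⟨_, cexp_two_pi_I_div_three_sq_add_self_add_one⟩
  have hω0 := cubeRoot_ne_zero hω
  have hr := nomeRoot_ne_zero (τ := τ)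
  have h1 := phi1_ne_zero hτ
  have h2 := phi2_ne_zero hτ
  have h3 := phi3_ne_zero hτ
  have h4 := phi4_ne_zero hτ
  have h5 := phi5_ne_zero hτ
  have hp := norm_nome_lt_one hτ
  have theta := jtheta_neg_mul_sq_mul_jtheta_neg_sq nome_ne_zero hp hω0
  rw [jtheta_neg_mul_cubeRoot_sq nome_ne_zero hp hω, jtheta_mul_cubeRoot_sq nome_ne_zero hp hω,
    jtheta_neg_cubeRoot_sq (norm_pow_lt_one hp two_ne_zero) hω,
    jtheta_neg_nome_mul_cubeRoot hτ hω, jtheta_nome_mul_cubeRoot hτ hω, jtheta_nome hτ,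
    jtheta_neg_one_nome_sq hτ, jtheta_neg_cubeRoot_nome_sq hτ hω, jtheta_neg_nome hτ,
    jtheta_cubeRoot_nome_sq hτ hω] at theta
  field_simp at theta
  refine mul_left_cancel₀ hω0 ?_
  linear_combination theta +
    phi1 τ ^ 2 * phi2 τ * phi3 τ ^ 3 * phi4 τ * phi5 τ * one_sub_cubeRoot_sq hω +
    ω * (phi3 τ * phi4 τ ^ 2 + 2 * phi1 τ * phi2 τ ^ 2 * phi5 τ ^ 3) * cubeRoot_pow_three hω

lemma four_mul_phi1_sq_mul_phi2_pow_four_mul_phi5_pow_six (hτ : 0 < τ.im) :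
    4 * phi1 τ ^ 2 * phi2 τ ^ 4 * phi5 τ ^ 6 =
      phi3 τ ^ 2 * phi4 τ ^ 4 +
        3 * phi1 τ ^ 4 * phi2 τ ^ 2 * phi3 τ ^ 2 * phi4 τ ^ 2 * phi5 τ ^ 4 := by
  obtain ⟨ω, hω⟩ : ∃ ω : ℂ, ω ^ 2 + ω + 1 = 0 := ⟨_, cexp_two_pi_I_div_three_sq_add_self_add_one⟩
  have hω0 := cubeRoot_ne_zero hω
  have hr := nomeRoot_ne_zero (τ := τ)
  have h1 := phi1_ne_zero hτ
  have h2 := phi2_ne_zero hτ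
  have h3 := phi3_ne_zero hτ
  have h4 := phi4_ne_zero hτ
  have h5 := phi5_ne_zero hτ
  have theta := mul_jtheta_neg_one_sq_mul_jtheta_neg_mul_sq nome_ne_zero (norm_nome_lt_one hτ) hω0
  rw [jtheta_neg_nome_mul_cubeRoot hτ hω, jtheta_nome hτ, jtheta_neg_one_nome_sq hτ,
    jtheta_neg_cubeRoot_nome_sq hτ hω, jtheta_neg_nome hτ, jtheta_cubeRoot_nome_sq hτ hω] at theta
  field_simp at theta
  refine mul_left_cancel₀ hω0 ?_
  linear_combination theta + ω * phi3 τ ^ 2 * phi4 τ ^ 4 * cubeRoot_pow_three hω -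
    phi1 τ ^ 4 * phi2 τ ^ 2 * phi3 τ ^ 2 * phi4 τ ^ 2 * phi5 τ ^ 4 * one_sub_cubeRoot_sq hω

end PhiRelations

section Hauptmodul

variable {τ : ℂ}

lemma hauptmodul_eq (hτ : 0 < τ.im) :
    hauptmodul τ = -(2 * phi1 τ * phi2 τ ^ 2 * phi5 τ ^ 3) / (phi3 τ * phi4 τ ^ 2) := by
  have hω := cexp_two_pi_I_div_three_sq_add_self_add_one
  have hr := nomeRoot_ne_zero (τ := τ)
  simp only [hauptmodul]
  rw [← nome, jtheta_neg_one_nome_sq hτ, jtheta_neg_nome_mul_cubeRoot hτ hω, jtheta_neg_nome hτ,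
    jtheta_neg_cubeRoot_nome_sq hτ hω]
  field_simp

lemma hauptmodul_sub_one (hτ : 0 < τ.im) :
    hauptmodul τ - 1 = -(3 * phi1 τ ^ 2 * phi2 τ * phi3 τ ^ 2 * phi5 τ) / phi4 τ := by
  have h3 := phi3_ne_zero hτ
  have h4 := phi4_ne_zero hτ
  rw [hauptmodul_eq hτ]
  field_simp
  linear_combination three_mul_phi1_sq_mul_phi2_mul_phi3_pow_three hτ

lemma hauptmodul_sub_one_ne_zero (hτ : 0 < τ.im) : hauptmodul τ - 1 ≠ 0 := by
  simp [hauptmodul_sub_one, hτ, phi1_ne_zero, phi2_ne_zero, phi3_ne_zero, phi4_ne_zero,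
    phi5_ne_zero]

lemma hauptmodul_add_one (hτ : 0 < τ.im) :
    hauptmodul τ + 1 = -(phi1 τ ^ 2 * phi2 τ * phi5 τ ^ 3) / (phi3 τ ^ 2 * phi4 τ) := by
  have h3 := phi3_ne_zero hτ
  have h4 := phi4_ne_zero hτ
  refine mul_left_cancel₀ (hauptmodul_sub_one_ne_zero hτ) ?_
  calc (hauptmodul τ - 1) * (hauptmodul τ + 1)
    _ = hauptmodul τ ^ 2 - 1 := by ring
    _ = 3 * phi1 τ ^ 4 * phi2 τ ^ 2 * phi5 τ ^ 4 / phi4 τ ^ 2 := by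
      rw [hauptmodul_eq hτ]
      field_simp
      linear_combination four_mul_phi1_sq_mul_phi2_pow_four_mul_phi5_pow_six hτ
    _ = _ := by
      rw [hauptmodul_sub_one hτ]
      field_simp

lemma hauptmodul_add_two (hτ : 0 < τ.im) :
    hauptmodul τ + 2 = 6 * phi1 τ * phi2 τ ^ 2 * phi4 τ ^ 2 * phi5 τ / phi3 τ := by
  have h3 := phi3_ne_zero hτ
  have h4 := phi4_ne_zero hτ
  refine mul_left_cancel₀ (hauptmodul_sub_one_ne_zero hτ) ?_
  calc (hauptmodul τ - 1) * (hauptmodul τ + 2)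
    _ = hauptmodul τ * (hauptmodul τ + 1) - 2 := by ring
    _ = -(18 * phi1 τ ^ 3 * phi2 τ ^ 3 * phi3 τ * phi4 τ * phi5 τ ^ 2) := by
      rw [hauptmodul_add_one hτ, hauptmodul_eq hτ]
      field_simp
      linear_combination 2 * phi1_pow_three_mul_phi2_pow_three_mul_phi5_pow_six hτ
    _ = _ := by
      rw [hauptmodul_sub_one hτ]
      field_simp
      ring

lemma two_mul_hauptmodul_add_one (hτ : 0 < τ.im) :
    2 * hauptmodul τ + 1 = -(3 * phi5 τ ^ 10) / (phi3 τ ^ 4 * phi4 τ ^ 4) := by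
  have h3 := phi3_ne_zero hτ
  have h4 := phi4_ne_zero hτ
  refine mul_left_cancel₀ (hauptmodul_sub_one_ne_zero hτ) ?_
  calc (hauptmodul τ - 1) * (2 * hauptmodul τ + 1)
    _ = 2 * hauptmodul τ ^ 2 - (hauptmodul τ + 1) := by ring
    _ = 9 * phi1 τ ^ 2 * phi2 τ * phi5 τ ^ 11 / (phi3 τ ^ 2 * phi4 τ ^ 5) := by
      rw [hauptmodul_add_one hτ, hauptmodul_eq hτ]
      field_simp
      linear_combination
        -(phi1 τ ^ 2 * phi2 τ * phi5 τ ^ 3) * nine_mul_phi5_pow_eight hτ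
    _ = _ := by
      rw [hauptmodul_sub_one hτ]
      field_simp
      ring

end Hauptmodul

/-- powers of the eta quotients as rational functions of the Hauptmodul ζ. -/
theorem phi_powers_in_terms_of_hauptmodul (τ : ℂ) (hτ : 0 < τ.im) :
    phi1 τ ^ 12
      = 2 ^ 4 * (hauptmodul τ - 1) ^ 2 * (hauptmodul τ + 1) ^ 6
        / (hauptmodul τ ^ 3 * (hauptmodul τ + 2) * (2 * hauptmodul τ + 1)) ∧
    phi2 τ ^ 12
      = -(hauptmodul τ ^ 6 * (hauptmodul τ + 2) ^ 2)
        / (2 ^ 8 * (hauptmodul τ + 1) ^ 3 * (hauptmodul τ - 1) * (2 * hauptmodul τ + 1)) ∧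
    phi3 τ ^ 12
      = (hauptmodul τ - 1) ^ 4 * (hauptmodul τ + 2) * (2 * hauptmodul τ + 1)
        / (3 ^ 6 * hauptmodul τ * (hauptmodul τ + 1) ^ 4) ∧
    phi4 τ ^ 12
      = -((hauptmodul τ - 1) * (hauptmodul τ + 2) ^ 4 * (2 * hauptmodul τ + 1))
        / (3 ^ 6 * hauptmodul τ ^ 4 * (hauptmodul τ + 1)) ∧
    phi5 τ ^ 6
      = (hauptmodul τ - 1) * (hauptmodul τ + 2) * (2 * hauptmodul τ + 1)
        / (3 ^ 3 * hauptmodul τ * (hauptmodul τ + 1)) := by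
  have h1 := phi1_ne_zero hτ
  have h2 := phi2_ne_zero hτ
  have h3 := phi3_ne_zero hτ
  have h4 := phi4_ne_zero hτ
  have h5 := phi5_ne_zero hτ
  rw [hauptmodul_sub_one hτ, hauptmodul_add_one hτ, hauptmodul_add_two hτ,
    two_mul_hauptmodul_add_one hτ, hauptmodul_eq hτ]
  refine ⟨?_, ?_, ?_, ?_, ?_⟩ <;> field_simp <;> norm_num
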